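/- For every positive integer n, the map pre_2 is injective on the set of partitions of n with exactly four parts. -/

import Mathlib

/-- `preK k P` is the multiset of products of all `k`-element sub-multisets of the
multiset of parts `P`; it is empty when `P` has fewer than `k` elements. -/
def preK (k : ℕ) (P : Multiset ℕ) : Multiset ℕ :=
  (P.powersetCard k).map Multiset.prod

/-!
For a multiset of four elements, all elementary symmetric functions `e₁, e₂, e₃, e₄` can be
recovered from `e₁ ≠ 0` and the multiset of pairwise products: the sum of the pairwise products
is `e₂`, their product is `e₄ ^ 3`, and the sum of their squares is `e₂ ^ 2 - 2 * e₁ * e₃ + 2 * e₄`.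
Cubing is injective on an ordered ring, so this yields `e₄` and then `e₃`. By Vieta's formulas
the elements are the roots of a polynomial determined by the `eᵢ`.
-/

open Multiset Polynomial

section CommSemiring

variable {R : Type*} [CommSemiring R]

theorem esymm_zero (s : Multiset R) : s.esymm 0 = 1 := by
  simp [esymm]

theorem esymm_one_eq_sum (s : Multiset R) : s.esymm 1 = s.sum := by
  simp [esymm, powersetCard_one]

theorem esymm_card_eq_prod (s : Multiset R) : s.esymm s.card = s.prod := by
  simp [esymm, powersetCard_self]

theorem esymm_succ_cons (k : ℕ) (a : R) (s : Multiset R) :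
    (a ::ₘ s).esymm (k + 1) = s.esymm (k + 1) + a * s.esymm k := by
  simp [esymm, powersetCard_cons, sum_map_mul_left]

end CommSemiring

section CommRing

variable {R : Type*} [CommRing R]

theorem sum_map_sq_eq_esymm (s : Multiset R) :
    (s.map (· ^ 2)).sum = s.esymm 1 ^ 2 - 2 * s.esymm 2 := by
  induction s using Multiset.induction_on with
  | empty => simp [esymm, powersetCard_zero_right]
  | cons a s ih =>
    rw [map_cons, sum_cons, ih, esymm_succ_cons, esymm_succ_cons, esymm_zero]
    ring

theorem sum_map_sq_prod_powersetCard_two (s : Multiset R) :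
    (((s.powersetCard 2).map prod).map (· ^ 2)).sum =
      s.esymm 2 ^ 2 - 2 * s.esymm 1 * s.esymm 3 + 2 * s.esymm 4 := by
  induction s using Multiset.induction_on with
  | empty => simp [esymm, powersetCard_zero_right]
  | cons a s ih =>
    have sum_sq_cons :
        ((((a ::ₘ s).powersetCard 2).map prod).map (· ^ 2)).sum =
          (((s.powersetCard 2).map prod).map (· ^ 2)).sum + a ^ 2 * (s.map (· ^ 2)).sum := by
      simp [powersetCard_cons, powersetCard_one, mul_pow, sum_map_mul_left]
    rw [sum_sq_cons, ih, sum_map_sq_eq_esymm]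
    simp only [esymm_succ_cons, esymm_zero]
    ring

theorem eq_of_forall_esymm_eq [IsDomain R] {s t : Multiset R}
    (hcard : s.card = t.card) (hesymm : ∀ k ≤ s.card, s.esymm k = t.esymm k) : s = t := by
  have hpoly : (s.map fun a => X - C a).prod = (t.map fun a => X - C a).prod := by
    rw [prod_X_sub_X_eq_sum_esymm, prod_X_sub_X_eq_sum_esymm, ← hcard]
    refine Finset.sum_congr rfl fun k hk => ?_
    rw [hesymm k (Finset.mem_range_succ_iff.mp hk)]
  simpa only [roots_multiset_prod_X_sub_C] using congrArg roots hpoly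

end CommRing

theorem prod_map_prod_powersetCard_succ {M : Type*} [CommMonoid M] (s : Multiset M) (k : ℕ) :
    ((s.powersetCard (k + 1)).map prod).prod = s.prod ^ (s.card - 1).choose k := by
  induction s using Multiset.induction_on generalizing k with
  | empty => simp [powersetCard_zero_right]
  | cons a s ih =>
    have prod_cons_powersetCard :
        (((a ::ₘ s).powersetCard (k + 1)).map prod).prod =
          s.prod ^ (s.card - 1).choose k *
            (a ^ s.card.choose k * ((s.powersetCard k).map prod).prod) := by
      simp [powersetCard_cons, prod_map_mul, ih]
    rw [prod_cons_powersetCard, prod_cons, card_cons, Nat.add_sub_cancel, mul_pow, mul_left_comm]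
    congr 1
    rcases k with _ | k
    · simp
    · rw [ih, ← pow_add]
      rcases s.empty_or_exists_mem with rfl | ⟨b, hb⟩
      · simp
      · obtain ⟨s', rfl⟩ := exists_cons_of_mem hb
        rw [card_cons, Nat.add_sub_cancel, Nat.choose_succ_succ', Nat.add_comm]

theorem stmt_13_general {R : Type*} [CommRing R] [LinearOrder R] [IsStrictOrderedRing R]
    {s t : Multiset R} (hs : s.card = 4) (ht : t.card = 4) (hsum : s.sum = t.sum)
    (hsum_ne : s.sum ≠ 0)
    (hpairs : (s.powersetCard 2).map prod = (t.powersetCard 2).map prod) : s = t := by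
  have h₁ : s.esymm 1 = t.esymm 1 := by rw [esymm_one_eq_sum, esymm_one_eq_sum, hsum]
  have h₂ : s.esymm 2 = t.esymm 2 := congrArg Multiset.sum hpairs
  have h₄ : s.esymm 4 = t.esymm 4 := by
    have hcube : s.prod ^ 3 = t.prod ^ 3 := by
      simpa [prod_map_prod_powersetCard_succ, hs, ht] using congrArg prod hpairs
    rw [← hs, esymm_card_eq_prod, hs, ← ht, esymm_card_eq_prod]
    exact (by decide : Odd 3).strictMono_pow.injective hcube
  have h₃ : s.esymm 3 = t.esymm 3 := by
    have hsq : s.esymm 2 ^ 2 - 2 * s.esymm 1 * s.esymm 3 + 2 * s.esymm 4 =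
        t.esymm 2 ^ 2 - 2 * t.esymm 1 * t.esymm 3 + 2 * t.esymm 4 := by
      rw [← sum_map_sq_prod_powersetCard_two, ← sum_map_sq_prod_powersetCard_two, hpairs]
    rw [← h₁, h₂, h₄, add_left_inj, sub_right_inj, esymm_one_eq_sum] at hsq
    exact mul_left_cancel₀ (mul_ne_zero two_ne_zero hsum_ne) hsq
  refine eq_of_forall_esymm_eq (hs.trans ht.symm) fun k hk => ?_
  rw [hs] at hk
  interval_cases k
  · rw [esymm_zero, esymm_zero]
  all_goals assumption

theorem map_natCast_preK {R : Type*} [CommSemiring R] (k : ℕ) (P : Multiset ℕ) :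
    (preK k P).map (Nat.cast : ℕ → R) = ((P.map Nat.cast).powersetCard k).map prod := by
  simp [preK, powersetCard_map]

theorem stmt_13 (n : ℕ) (hn : 1 ≤ n) :
    ∀ lam mu : Multiset ℕ,
      (∀ x ∈ lam, 0 < x) → lam.sum = n → lam.card = 4 →
      (∀ x ∈ mu, 0 < x) → mu.sum = n → mu.card = 4 →
      preK 2 lam = preK 2 mu → lam = mu := by
  intro lam mu _ hlam_sum hlam_card _ hmu_sum hmu_card hpre
  refine map_injective (Nat.cast_injective (R := ℤ)) (stmt_13_general ?_ ?_ ?_ ?_ ?_)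
  · rw [card_map, hlam_card]
  · rw [card_map, hmu_card]
  · rw [← Nat.cast_multiset_sum, ← Nat.cast_multiset_sum, hlam_sum, hmu_sum]
  · rw [← Nat.cast_multiset_sum, hlam_sum]
    exact Nat.cast_ne_zero.mpr (Nat.one_le_iff_ne_zero.mp hn)
  · rw [← map_natCast_preK, ← map_natCast_preK, hpre]
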